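/- Let m ≥ 2. For every j with 2 ≤ j ≤ m there exists a sign ε ∈ {1, −1} such that, in ⋀^{m−1}_K Ω_{K/ℂ}: ι_{V₁} ι_{V₂} ⋯ ι_{V_m} ( (z₀ A₂ ⋯ A_{j−1} · B_j B_{j+1} ⋯ B_{m−1} · A_m)^{−1} Ω ) = ε · dlog(z₀²/B_m) ∧ dlog(A₂/B_m) ∧ ⋯ ∧ dlog(A_{j−1}/B_m) ∧ dlog(B_j/B_m) ∧ ⋯ ∧ dlog(B_{m−1}/B_m). (This is Proposition 3.11 of the paper for the odd-dimensional quadric Q_{2m−1}; j = m is the Schubert case and j = 2 is the Rietsch case.) -/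

import Mathlib

/-!
Proposition 3.11 of the paper, for the odd-dimensional quadric `Q_{2m−1}`:
for every `2 ≤ j ≤ m` there is a sign `ε ∈ {1, −1}` such that
`ι_{V₁}⋯ι_{V_m} ((z₀A₂⋯A_{j−1}·B_j⋯B_{m−1}·A_m)⁻¹ Ω)
 = ε · dlog(z₀²/B_m) ∧ dlog(A₂/B_m) ∧ ⋯ ∧ dlog(A_{j−1}/B_m)
     ∧ dlog(B_j/B_m) ∧ ⋯ ∧ dlog(B_{m−1}/B_m)`.
-/

set_option synthInstance.maxHeartbeats 1000000
set_option maxHeartbeats 1000000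

noncomputable section

open MvPolynomial

/-- The coordinate ring `R = ℂ[z₀, z₁, …, z_{2m−2}]` of the affine chart
`{x_{2m} ≠ 0}` of the odd quadric `Q_{2m−1}`. -/
abbrev QodR (m : ℕ) := MvPolynomial (Fin (2 * m - 1)) ℂ

/-- The fraction field `K = Frac(R)`. -/
abbrev QodK (m : ℕ) := FractionRing (QodR m)

/-- The coordinate `z_j` for `0 ≤ j ≤ 2m−2`. -/
def qodZ (m j : ℕ) : QodR m :=
  if h : j < 2 * m - 1 then X ⟨j, h⟩ else 0

/-- `A_j = z_{2j−1} z_{2j}` for `1 ≤ j ≤ m−1`, and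
`A_m = −(z₀² + z₁z₂ + ⋯ + z_{2m−3}z_{2m−2})` (the quadric relation solved for
`z_{2m−1}`, with the convention `z_{2m} = 1`). -/
def qodA (m j : ℕ) : QodR m :=
  if j = m then
    -(qodZ m 0 ^ 2 + ∑ i ∈ Finset.Icc 1 (m - 1), qodZ m (2 * i - 1) * qodZ m (2 * i))
  else qodZ m (2 * j - 1) * qodZ m (2 * j)

/-- `B_j = ∑_{i=j}^m A_i` for `2 ≤ j ≤ m` (so `B_m = A_m`). -/
def qodB (m j : ℕ) : QodR m := ∑ i ∈ Finset.Icc j m, qodA m i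

/-- The ℂ-derivations `V_j = z_{2j−1}∂/∂z_{2j−1} − z_{2j}∂/∂z_{2j}` for
`1 ≤ j ≤ m−1`, and `V_m = ∑_{i=0}^{2m−2} z_i ∂/∂z_i` (the Euler derivation). -/
def qodV (m i : ℕ) : Derivation ℂ (QodR m) (QodR m) :=
  if i = m then
    MvPolynomial.mkDerivation ℂ (fun s => qodZ m s.1)
  else
    MvPolynomial.mkDerivation ℂ (fun s =>
      if s.1 = 2 * i - 1 then qodZ m s.1
      else if s.1 = 2 * i then -(qodZ m s.1) else 0)

/-- Contraction (interior product) of `⋀_A Ω_{A/ℂ}` by the `A`-linear functional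
`Ω_{A/ℂ} → A` determined by `dg ↦ V g`, for a ℂ-derivation `V` of `A`. -/
def contrDer {A : Type} [CommRing A] [Algebra ℂ A] (V : Derivation ℂ A A) :
    ExteriorAlgebra A (Ω[A⁄ℂ]) →ₗ[A] ExteriorAlgebra A (Ω[A⁄ℂ]) :=
  CliffordAlgebra.contractLeft ((KaehlerDifferential.linearMapEquivDerivation ℂ A).symm V)

/-- `dlog f = f⁻¹ df ∈ Ω_{K/ℂ}`. -/
def dlog (m : ℕ) (f : QodK m) : Ω[QodK m⁄ℂ] :=
  f⁻¹ • KaehlerDifferential.D ℂ (QodK m) f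

/-- The image of `z_j` in `K`. -/
def qodZK (m j : ℕ) : QodK m := algebraMap (QodR m) (QodK m) (qodZ m j)

/-- The image of `A_j` in `K`. -/
def qodAK (m j : ℕ) : QodK m := algebraMap (QodR m) (QodK m) (qodA m j)

/-- The image of `B_j` in `K`. -/
def qodBK (m j : ℕ) : QodK m := algebraMap (QodR m) (QodK m) (qodB m j)

/-- `Ω = dz₀∧dz₁∧⋯∧dz_{2m−2}`, viewed in `⋀_K Ω_{K/ℂ}`. -/
def qodOmegaK (m : ℕ) : ExteriorAlgebra (QodK m) (Ω[QodK m⁄ℂ]) :=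
  (((List.range (2 * m - 1)).map (fun j =>
    ExteriorAlgebra.ι (QodK m) (KaehlerDifferential.D ℂ (QodK m) (qodZK m j)))).prod)

/-!
Each `V_i` with `i < m` contracts `dz_{2i-1} ∧ dz_{2i}` to `dA_i` and kills all other coordinate
differentials, so contracting `Ω` by `V_1, …, V_{m-1}` gives `± dz₀ ∧ dA_1 ∧ ⋯ ∧ dA_{m-1}`. The
quadric relation makes `∑ dA_i` a multiple of `dz₀`, and the `B_k` are unitriangular in the `A_i`,
so this is also `± dz₀ ∧ dA_2 ∧ ⋯ ∧ dA_{j-1} ∧ dB_j ∧ ⋯ ∧ dB_m`. Dividing by the coefficient turns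
every factor into a logarithmic differential, and all but the first and last may be replaced by
`dlog (A_i / B_m)` and `dlog (B_i / B_m)`, on which the Euler derivation vanishes. Its contraction
therefore only sees `dlog z₀ ∧ dlog B_m`, of weights `1` and `2`, and yields
`2 dlog z₀ - dlog B_m = dlog (z₀² / B_m)`. The signs cancel, so that `ε = 1`.
-/

section Wedge

open ExteriorAlgebra

variable {R M I : Type*} [CommRing R] [AddCommGroup M] [Module R M]

theorem ι_mul_prod_map_ι (v : M) (l : List M) :
    ι R v * (l.map (ι R)).prod = (-1 : R) ^ l.length • ((l.map (ι R)).prod * ι R v) := by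
  induction l with
  | nil => simp
  | cons w l ih =>
    have swap : ι R v * ι R w = -(ι R w * ι R v) :=
      eq_neg_of_add_eq_zero_left (ι_add_mul_swap v w)
    rw [List.map_cons, List.prod_cons, ← mul_assoc, swap, neg_mul, mul_assoc, ih, mul_smul_comm,
      List.length_cons, pow_succ', mul_smul, neg_one_smul, mul_assoc]

theorem prod_map_ι_mul_ι (l : List M) (v : M) :
    (l.map (ι R)).prod * ι R v = (-1 : R) ^ l.length • (ι R v * (l.map (ι R)).prod) := by
  rw [ι_mul_prod_map_ι, smul_smul, ← mul_pow, neg_one_mul, neg_neg, one_pow, one_smul]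

theorem ι_mul_prod_map_ι_of_mem {v : M} {l : List M} (hv : v ∈ l) :
    ι R v * (l.map (ι R)).prod = 0 := by
  obtain ⟨i, rfl⟩ := List.mem_iff_get.1 hv
  simpa only [List.get_eq_getElem, List.ofFn_getElem_eq_map] using ι_mul_prod_list (R := R) l.get i

theorem ι_mul_prod_map_ι_of_mem_span {v : M} {l : List M}
    (hv : v ∈ Submodule.span R {w | w ∈ l}) : ι R v * (l.map (ι R)).prod = 0 := by
  induction hv using Submodule.span_induction with
  | mem w hw => exact ι_mul_prod_map_ι_of_mem hw
  | zero => rw [map_zero, zero_mul]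
  | add v w _ _ hv hw => rw [map_add, add_mul, hv, hw, add_zero]
  | smul c v _ hv => rw [map_smul, smul_mul_assoc, hv, smul_zero]

theorem prod_map_ι_mul_ι_congr {v w : M} {l : List M}
    (h : v - w ∈ Submodule.span R {u | u ∈ l}) :
    (l.map (ι R)).prod * ι R v = (l.map (ι R)).prod * ι R w := by
  rw [← sub_eq_zero, ← mul_sub, ← map_sub, prod_map_ι_mul_ι, ι_mul_prod_map_ι_of_mem_span h,
    smul_zero]

theorem prod_map_ι_smul (l : List I) (c : I → R) (v : I → M) :
    (l.map fun i => ι R (c i • v i)).prod = (l.map c).prod • (l.map fun i => ι R (v i)).prod := by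
  induction l with
  | nil => simp
  | cons i l ih =>
    rw [List.map_cons, List.prod_cons, ih, map_smul, smul_mul_smul_comm, List.map_cons,
      List.prod_cons, List.map_cons, List.prod_cons]

theorem prod_map_ι_add_mul_ι (l : List I) (v : I → M) (w : M) :
    (l.map fun i => ι R (v i + w)).prod * ι R w = (l.map fun i => ι R (v i)).prod * ι R w := by
  induction l with
  | nil => simp
  | cons i l ih =>
    have hw : ι R w * ((l.map fun i => ι R (v i)).prod * ι R w) = 0 := by
      simpa [Function.comp_def] using
        ι_mul_prod_map_ι_of_mem (R := R) (l := l.map v ++ [w]) (v := w) (by simp)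
    rw [List.map_cons, List.prod_cons, mul_assoc, ih, map_add, add_mul, hw, add_zero,
      List.map_cons, List.prod_cons, mul_assoc]

theorem prod_map_ι_sum_Ico (v : ℕ → M) (j n : ℕ) :
    ((List.Ico j n).map fun k => ι R (∑ i ∈ Finset.Ico k n, v i)).prod =
      ((List.Ico j n).map fun k => ι R (v k)).prod := by
  rcases le_total n j with hnj | hjn
  · rw [List.Ico.eq_nil_of_le hnj, List.map_nil, List.map_nil]
  induction hjn using Nat.decreasingInduction with
  | self => rw [List.Ico.self_empty, List.map_nil, List.map_nil]
  | of_succ k hk ih =>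
    have tail_mul : ι R (∑ i ∈ Finset.Ico (k + 1) n, v i) *
        ((List.Ico (k + 1) n).map fun k => ι R (v k)).prod = 0 := by
      have hmem : ∑ i ∈ Finset.Ico (k + 1) n, v i ∈
          Submodule.span R {w | w ∈ (List.Ico (k + 1) n).map v} :=
        Submodule.sum_mem _ fun i hi => Submodule.subset_span <|
          List.mem_map_of_mem (List.Ico.mem.2 (Finset.mem_Ico.1 hi))
      simpa only [List.map_map, Function.comp_def] using ι_mul_prod_map_ι_of_mem_span hmem
    rw [List.Ico.eq_cons hk, List.map_cons, List.prod_cons, ih, List.map_cons, List.prod_cons,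
      Finset.sum_eq_sum_Ico_succ_bot hk, map_add, add_mul, tail_mul, add_zero]

theorem ι_mul_prod_map_ι_Ico_two {m : ℕ} (hm : 2 ≤ m) {u : M} {v : ℕ → M}
    (h : ∑ i ∈ Finset.Icc 1 m, v i ∈ Submodule.span R {u}) :
    ι R u * ((List.Ico 2 (m + 1)).map fun k => ι R (v k)).prod =
      (-1 : R) ^ (m - 1) • (ι R u * ((List.Ico 1 m).map fun k => ι R (v k)).prod) := by
  have last_mem : v m - -v 1 ∈ Submodule.span R {w | w ∈ u :: (List.Ico 2 m).map v} := by
    have last_eq : v m - -v 1 = ∑ i ∈ Finset.Icc 1 m, v i - ∑ i ∈ Finset.Ico 2 m, v i := by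
      rw [← Finset.Ico_add_one_right_eq_Icc, Finset.sum_Ico_succ_top (by omega),
        Finset.sum_eq_sum_Ico_succ_bot (by omega)]
      abel
    rw [last_eq]
    refine Submodule.sub_mem _ (Submodule.span_mono (by simp) h)
      (Submodule.sum_mem _ fun i hi => ?_)
    exact Submodule.subset_span <|
      List.mem_cons_of_mem _ (List.mem_map_of_mem (List.Ico.mem.2 (Finset.mem_Ico.1 hi)))
  have replace_last := prod_map_ι_mul_ι_congr last_mem
  have move_first := prod_map_ι_mul_ι (R := R) ((List.Ico 2 m).map v) (v 1)
  simp only [List.map_cons, List.prod_cons, List.map_map, Function.comp_def, mul_assoc,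
    List.length_map, List.Ico.length] at replace_last move_first
  rw [List.Ico.succ_top hm, List.map_append, List.prod_append, List.map_singleton,
    List.prod_singleton, replace_last, map_neg, mul_neg, move_first,
    List.Ico.eq_cons (by omega : 1 < m), List.map_cons, List.prod_cons,
    show m - 1 = m - 2 + 1 by omega, pow_succ', neg_one_mul, neg_smul, mul_neg, mul_smul_comm]

theorem ι_mul_prod_map_ι_tails {j m : ℕ} (hj : 2 ≤ j) (hjm : j ≤ m) {u : M} {v : ℕ → M}
    (h : ∑ i ∈ Finset.Icc 1 m, v i ∈ Submodule.span R {u}) :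
    ι R u * (((List.Ico 2 j).map fun k => ι R (v k)).prod *
        ((List.Ico j (m + 1)).map fun k => ι R (∑ i ∈ Finset.Icc k m, v i)).prod) =
      (-1 : R) ^ (m - 1) • (ι R u * ((List.Ico 1 m).map fun k => ι R (v k)).prod) := by
  simp only [← Finset.Ico_add_one_right_eq_Icc, prod_map_ι_sum_Ico]
  rw [← List.prod_append, ← List.map_append, List.Ico.append_consecutive hj (by omega),
    ι_mul_prod_map_ι_Ico_two (hj.trans hjm) h]

end Wedge

section Contraction

open CliffordAlgebra

variable {R M I : Type*} [CommRing R] [AddCommGroup M] [Module R M] {Q : QuadraticForm R M}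

theorem contractLeft_prod_map_ι_mul (d : Module.Dual R M) {l : List M} (hd : ∀ v ∈ l, d v = 0)
    (x : CliffordAlgebra Q) :
    contractLeft d ((l.map (ι Q)).prod * x) =
      (-1 : R) ^ l.length • ((l.map (ι Q)).prod * contractLeft d x) := by
  induction l with
  | nil => simp
  | cons v l ih =>
    rw [List.forall_mem_cons] at hd
    rw [List.map_cons, List.prod_cons, mul_assoc, contractLeft_ι_mul, hd.1, zero_smul, zero_sub,
      ih hd.2, mul_smul_comm, List.length_cons, pow_succ', mul_smul, neg_one_smul, mul_assoc]

theorem contractLeft_prod_map_ι_eq_zero (d : Module.Dual R M) {l : List M}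
    (hd : ∀ v ∈ l, d v = 0) : contractLeft d (l.map (ι Q)).prod = 0 := by
  simpa using contractLeft_prod_map_ι_mul (Q := Q) d hd 1

theorem contractLeft_ι_mul_prod_map_ι_mul_ι (d : Module.Dual R M) {l : List M}
    (hd : ∀ v ∈ l, d v = 0) (u w : M) :
    contractLeft d (ExteriorAlgebra.ι R u *
        ((l.map (ExteriorAlgebra.ι R)).prod * ExteriorAlgebra.ι R w)) =
      (-1 : R) ^ l.length •
        (ExteriorAlgebra.ι R (d u • w - d w • u) * (l.map (ExteriorAlgebra.ι R)).prod) := by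
  rw [contractLeft_ι_mul, contractLeft_prod_map_ι_mul d hd, contractLeft_ι, prod_map_ι_mul_ι,
    ← Algebra.commutes, ← Algebra.smul_def, map_sub, map_smul, map_smul, sub_mul, smul_sub,
    mul_smul_comm, mul_smul_comm, smul_mul_assoc, smul_mul_assoc, smul_comm (d u)]

/-- The iterated left contraction `ι_{d₁} ∘ ⋯ ∘ ι_{dₙ}` by a list `[d₁, …, dₙ]` of functionals;
the last functional is contracted first. -/
def iterContractLeft (l : List (Module.Dual R M)) : CliffordAlgebra Q →ₗ[R] CliffordAlgebra Q :=
  (l.map fun d => (contractLeft d : Module.End R (CliffordAlgebra Q))).prod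

@[simp]
theorem iterContractLeft_nil (x : CliffordAlgebra Q) : iterContractLeft [] x = x := rfl

@[simp]
theorem iterContractLeft_cons (d : Module.Dual R M) (l : List (Module.Dual R M))
    (x : CliffordAlgebra Q) :
    iterContractLeft (d :: l) x = contractLeft d (iterContractLeft l x) := by
  rw [iterContractLeft, List.map_cons, List.prod_cons, Module.End.mul_apply, iterContractLeft]

theorem iterContractLeft_map (d : I → Module.Dual R M) (l : List I) (x : CliffordAlgebra Q) :
    iterContractLeft (l.map d) x = l.foldr (fun i y => contractLeft (d i) y) x := by
  induction l with
  | nil => rfl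
  | cons i l ih => rw [List.map_cons, iterContractLeft_cons, ih, List.foldr_cons]

theorem iterContractLeft_concat (l : List (Module.Dual R M)) (d : Module.Dual R M)
    (x : CliffordAlgebra Q) :
    iterContractLeft (l ++ [d]) x =
      (-1 : R) ^ l.length • contractLeft d (iterContractLeft l x) := by
  induction l with
  | nil => simp
  | cons d' l ih =>
    rw [List.cons_append, iterContractLeft_cons, ih, map_smul, contractLeft_comm,
      iterContractLeft_cons, List.length_cons, pow_succ, mul_smul, neg_one_smul]

theorem iterContractLeft_ι_mul {l : List (Module.Dual R M)} {v : M} (hv : ∀ d ∈ l, d v = 0)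
    (x : CliffordAlgebra Q) :
    iterContractLeft l (ι Q v * x) = (-1 : R) ^ l.length • (ι Q v * iterContractLeft l x) := by
  induction l with
  | nil => simp
  | cons d l ih =>
    rw [List.forall_mem_cons] at hv
    rw [iterContractLeft_cons, ih hv.2, map_smul, contractLeft_ι_mul, hv.1, zero_smul, zero_sub,
      iterContractLeft_cons, List.length_cons, pow_succ, mul_smul, neg_one_smul]

theorem iterContractLeft_ι_mul_ι_mul {l : List (Module.Dual R M)} {v w : M}
    (hv : ∀ d ∈ l, d v = 0) (hw : ∀ d ∈ l, d w = 0) (x : CliffordAlgebra Q) :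
    iterContractLeft l (ι Q v * (ι Q w * x)) = ι Q v * (ι Q w * iterContractLeft l x) := by
  rw [iterContractLeft_ι_mul hv, iterContractLeft_ι_mul hw, mul_smul_comm, smul_smul, ← mul_pow,
    neg_one_mul, neg_neg, one_pow, one_smul]

theorem iterContractLeft_prod_ι_mul_ι {d : I → Module.Dual R M} {v w : I → M} {l : List I}
    (hl : l.Nodup) (hv : ∀ i ∈ l, ∀ k ∈ l, i ≠ k → d i (v k) = 0)
    (hw : ∀ i ∈ l, ∀ k ∈ l, i ≠ k → d i (w k) = 0) :
    iterContractLeft (l.map d) (l.map fun i => ι Q (v i) * ι Q (w i)).prod =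
      (l.map fun i => ι Q (d i (v i) • w i - d i (w i) • v i)).prod := by
  induction l with
  | nil => simp
  | cons a l ih =>
    obtain ⟨ha, hl⟩ := List.nodup_cons.1 hl
    simp only [List.forall_mem_cons, ne_eq, not_true_eq_false, false_imp_iff, true_and] at hv hw
    have hne : ∀ i ∈ l, i ≠ a := fun i hi h => ha (h ▸ hi)
    have tail_killed : contractLeft (d a)
        (l.map fun i => ι Q (d i (v i) • w i - d i (w i) • v i)).prod = 0 := by
      have key := contractLeft_prod_map_ι_eq_zero (Q := Q) (d a)
        (l := l.map fun i => d i (v i) • w i - d i (w i) • v i) fun u hu => by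
          obtain ⟨i, hi, rfl⟩ := List.mem_map.1 hu
          rw [map_sub, map_smul, map_smul, hv.1 i hi (hne i hi).symm, hw.1 i hi (hne i hi).symm,
            smul_zero, smul_zero, sub_zero]
      rwa [List.map_map] at key
    rw [List.map_cons, List.map_cons, List.prod_cons, mul_assoc, iterContractLeft_cons,
      iterContractLeft_ι_mul_ι_mul
        (List.forall_mem_map.2 fun i hi => (hv.2 i hi).1 (hne i hi))
        (List.forall_mem_map.2 fun i hi => (hw.2 i hi).1 (hne i hi)),
      ih hl (fun i hi => (hv.2 i hi).2) (fun i hi => (hw.2 i hi).2), contractLeft_ι_mul,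
      contractLeft_ι_mul, tail_killed, mul_zero, sub_zero, List.map_cons, List.prod_cons, map_sub,
      map_smul, map_smul, sub_mul, smul_mul_assoc, smul_mul_assoc, mul_smul_comm]

end Contraction

theorem prod_map_range_two_mul_add_one {N : Type*} [Monoid N] (f : ℕ → N) (n : ℕ) :
    ((List.range (2 * n + 1)).map f).prod =
      f 0 * ((List.Ico 1 (n + 1)).map fun i => f (2 * i - 1) * f (2 * i)).prod := by
  induction n with
  | zero => simp
  | succ n ih =>
    rw [Nat.mul_add_one, List.range_succ, List.range_succ, List.Ico.succ_top (by omega)]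
    simp only [List.map_append, List.prod_append, ih, List.map_singleton, List.prod_singleton,
      mul_assoc, Nat.mul_add_one, Nat.add_one_sub_one]

section LogDifferential

open ExteriorAlgebra

variable {k K M : Type*} [CommRing k] [Field K] [Algebra k K] [AddCommGroup M] [Module k M]
  [Module K M] (D : Derivation k K M)

/-- The logarithmic differential `dlog f = f⁻¹ • D f` with respect to a derivation `D`; it is `0`
at `f = 0`. -/
def logDifferential (f : K) : M := f⁻¹ • D f

theorem smul_logDifferential {f : K} (hf : f ≠ 0) : f • logDifferential D f = D f :=
  smul_inv_smul₀ hf _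

theorem logDifferential_mul {f g : K} (hf : f ≠ 0) (hg : g ≠ 0) :
    logDifferential D (f * g) = logDifferential D f + logDifferential D g := by
  rw [logDifferential, D.leibniz, smul_add, smul_smul, smul_smul, add_comm, logDifferential,
    logDifferential]
  congr 2 <;> field_simp

theorem logDifferential_div {f g : K} (hf : f ≠ 0) (hg : g ≠ 0) :
    logDifferential D (f / g) = logDifferential D f - logDifferential D g := by
  rw [eq_sub_iff_add_eq, ← logDifferential_mul D (div_ne_zero hf hg) hg, div_mul_cancel₀ f hg]

theorem dual_logDifferential (φ : Module.Dual K M) {f c : K} (hf : f ≠ 0) (h : φ (D f) = c * f) :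
    φ (logDifferential D f) = c := by
  rw [logDifferential, map_smul, h, smul_eq_mul, mul_comm, mul_inv_cancel_right₀ hf]

theorem prod_map_ι_derivation_mul_ι {b : K} (hb : b ≠ 0) {L : List K} (hL : ∀ y ∈ L, y ≠ 0) :
    (L.map fun y => ι K (D y)).prod * ι K (D b) =
      (L.prod * b) • ((L.map fun y => ι K (logDifferential D (y / b))).prod *
        ι K (logDifferential D b)) := by
  have D_eq : ∀ y ∈ L, ι K (D y) =
      ι K (y • (logDifferential D (y / b) + logDifferential D b)) := fun y hy => by
    rw [logDifferential_div D (hL y hy) hb, sub_add_cancel, smul_logDifferential D (hL y hy)]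
  rw [List.map_congr_left D_eq, prod_map_ι_smul, List.map_id', ← smul_logDifferential D hb,
    map_smul, smul_mul_smul_comm, prod_map_ι_add_mul_ι]

theorem contractLeft_prod_map_ι_derivation (φ : Module.Dual K M) {x b : K} {L : List K}
    (hx : x ≠ 0) (hb : b ≠ 0) (hL : ∀ y ∈ L, y ≠ 0) (hφx : φ (D x) = x)
    (hφb : φ (D b) = 2 * b) (hφL : ∀ y ∈ L, φ (D y) = 2 * y) :
    CliffordAlgebra.contractLeft φ
        (ι K (D x) * ((L.map fun y => ι K (D y)).prod * ι K (D b))) =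
      ((-1) ^ (L.length + 1) * (x * L.prod * b)) • (ι K (logDifferential D (x ^ 2 / b)) *
        (L.map fun y => ι K (logDifferential D (y / b))).prod) := by
  have φ_dlog_x : φ (logDifferential D x) = 1 :=
    dual_logDifferential D φ hx (by rw [hφx, one_mul])
  have φ_dlog_b : φ (logDifferential D b) = 2 := dual_logDifferential D φ hb hφb
  have φ_dlog_L : ∀ v ∈ L.map fun y => logDifferential D (y / b), φ v = 0 :=
    List.forall_mem_map.2 fun y hy => by
      rw [logDifferential_div D (hL y hy) hb, map_sub, φ_dlog_b,
        dual_logDifferential D φ (hL y hy) (hφL y hy), sub_self]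
  have contracted_ends : φ (logDifferential D x) • logDifferential D b -
      φ (logDifferential D b) • logDifferential D x = -logDifferential D (x ^ 2 / b) := by
    rw [logDifferential_div D (pow_ne_zero 2 hx) hb, sq, logDifferential_mul D hx hx, φ_dlog_x,
      φ_dlog_b, one_smul, two_smul, neg_sub]
  have key := contractLeft_ι_mul_prod_map_ι_mul_ι φ φ_dlog_L (logDifferential D x)
    (logDifferential D b)
  rw [contracted_ends, List.map_map, Function.comp_def, List.length_map, map_neg, neg_mul, smul_neg,
    ← neg_smul, ← neg_one_mul, ← pow_succ'] at key
  rw [prod_map_ι_derivation_mul_ι D hb hL, ← smul_logDifferential D hx, map_smul,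
    smul_mul_smul_comm, map_smul, key, smul_smul]
  congr 1
  ring

end LogDifferential

section Quadric

open ExteriorAlgebra

variable {k K M : Type*} [CommRing k] [Field K] [Algebra k K] [AddCommGroup M] [Module k M]
  [Module K M] (D : Derivation k K M) {m j : ℕ} {z A B : ℕ → K}

theorem iterContractLeft_prod_map_ι_coordinates (hm : 1 ≤ m)
    (hA : ∀ i ∈ Finset.Ico 1 m, A i = z (2 * i - 1) * z (2 * i)) {φ : ℕ → Module.Dual K M}
    (hφ : ∀ i ∈ Finset.Ico 1 m, ∀ s < 2 * m - 1,
      φ i (D (z s)) = if s = 2 * i - 1 then z s else if s = 2 * i then -z s else 0) :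
    iterContractLeft ((List.Ico 1 m).map φ)
        ((List.range (2 * m - 1)).map fun s => ι K (D (z s))).prod =
      (-1 : K) ^ (m - 1) •
        (ι K (D (z 0)) * ((List.Ico 1 m).map fun i => ι K (D (A i))).prod) := by
  simp only [Finset.mem_Ico] at hA hφ
  have dz_zero : ∀ d ∈ (List.Ico 1 m).map φ, d (D (z 0)) = 0 :=
    List.forall_mem_map.2 fun i hi => by
      rw [List.Ico.mem] at hi
      rw [hφ i hi 0 (by omega), if_neg (by omega), if_neg (by omega)]
  have contracted_pair : ∀ i ∈ List.Ico 1 m,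
      ι K (φ i (D (z (2 * i - 1))) • D (z (2 * i)) - φ i (D (z (2 * i))) • D (z (2 * i - 1))) =
        ι K (D (A i)) := fun i hi => by
    rw [List.Ico.mem] at hi
    rw [hφ i hi _ (by omega), if_pos rfl, hφ i hi _ (by omega), if_neg (by omega), if_pos rfl,
      hA i hi, D.leibniz, neg_smul, sub_neg_eq_add]
  obtain ⟨n, rfl⟩ := Nat.exists_eq_add_of_le' hm
  rw [show 2 * (n + 1) - 1 = 2 * n + 1 by omega, prod_map_range_two_mul_add_one,
    iterContractLeft_ι_mul dz_zero, iterContractLeft_prod_ι_mul_ι (List.Ico.nodup 1 (n + 1)),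
    List.map_congr_left contracted_pair, List.length_map, List.Ico.length]
  all_goals
    intro i hi k hk hik
    rw [List.Ico.mem] at hi hk
    rw [hφ i hi _ (by omega), if_neg (by omega), if_neg (by omega)]

theorem iterContractLeft_Ico_prod_map_ι_coordinates (hm : 1 ≤ m)
    (hA : ∀ i ∈ Finset.Ico 1 m, A i = z (2 * i - 1) * z (2 * i)) {φ : ℕ → Module.Dual K M}
    (hφ : ∀ i ∈ Finset.Ico 1 m, ∀ s < 2 * m - 1,
      φ i (D (z s)) = if s = 2 * i - 1 then z s else if s = 2 * i then -z s else 0) :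
    iterContractLeft ((List.Ico 1 (m + 1)).map φ)
        ((List.range (2 * m - 1)).map fun s => ι K (D (z s))).prod =
      CliffordAlgebra.contractLeft (φ m)
        (ι K (D (z 0)) * ((List.Ico 1 m).map fun i => ι K (D (A i))).prod) := by
  rw [List.Ico.succ_top hm, List.map_append, List.map_singleton, iterContractLeft_concat,
    iterContractLeft_prod_map_ι_coordinates D hm hA hφ, map_smul, List.length_map, List.Ico.length,
    smul_smul, ← mul_pow, neg_one_mul, neg_neg, one_pow, one_smul]

theorem dual_derivation_mul {φ : Module.Dual K M} {x y a b : K} (hx : φ (D x) = a * x)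
    (hy : φ (D y) = b * y) : φ (D (x * y)) = (a + b) * (x * y) := by
  rw [D.leibniz, map_add, map_smul, map_smul, hx, hy, smul_eq_mul, smul_eq_mul]
  ring

theorem dual_derivation_quadric_term
    (hA : ∀ i ∈ Finset.Ico 1 m, A i = z (2 * i - 1) * z (2 * i))
    (hrel : z 0 ^ 2 + ∑ i ∈ Finset.Icc 1 m, A i = 0) {φ : Module.Dual K M}
    (hφ : ∀ s < 2 * m - 1, φ (D (z s)) = z s) {i : ℕ} (hi : i ∈ Finset.Icc 1 m) :
    φ (D (A i)) = 2 * A i := by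
  have φ_mul : ∀ s < 2 * m - 1, ∀ t < 2 * m - 1, φ (D (z s * z t)) = 2 * (z s * z t) :=
    fun s hs t ht => by
      rw [dual_derivation_mul D (a := 1) (b := 1) (by rw [hφ s hs, one_mul])
        (by rw [hφ t ht, one_mul]), one_add_one_eq_two]
  have φ_lt : ∀ i ∈ Finset.Ico 1 m, φ (D (A i)) = 2 * A i := fun i hi => by
    have := Finset.mem_Ico.1 hi
    rw [hA i hi, φ_mul _ (by omega) _ (by omega)]
  rw [Finset.mem_Icc] at hi
  rcases hi.2.lt_or_eq with him | rfl
  · exact φ_lt i (Finset.mem_Ico.2 ⟨hi.1, him⟩)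
  have last_eq : A i = -(z 0 * z 0 + ∑ l ∈ Finset.Ico 1 i, A l) := by
    rw [← Finset.Ico_add_one_right_eq_Icc, Finset.sum_Ico_succ_top hi.1] at hrel
    linear_combination hrel
  rw [last_eq, map_neg, map_neg, map_add, map_add, map_sum, map_sum,
    φ_mul 0 (by omega) 0 (by omega), Finset.sum_congr rfl φ_lt, ← Finset.mul_sum]
  ring

theorem ι_mul_prod_map_ι_derivation_tails (hj : 2 ≤ j) (hjm : j ≤ m)
    (hrel : z 0 ^ 2 + ∑ i ∈ Finset.Icc 1 m, A i = 0)
    (hB : ∀ i, B i = ∑ l ∈ Finset.Icc i m, A l) :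
    ι K (D (z 0)) * ((((List.Ico 2 j).map A ++ (List.Ico j m).map B).map fun y => ι K (D y)).prod *
        ι K (D (B m))) =
      (-1 : K) ^ (m - 1) •
        (ι K (D (z 0)) * ((List.Ico 1 m).map fun i => ι K (D (A i))).prod) := by
  have sum_mem : ∑ i ∈ Finset.Icc 1 m, D (A i) ∈ Submodule.span K {D (z 0)} := by
    rw [← map_sum, eq_neg_of_add_eq_zero_right hrel, map_neg, sq, D.leibniz, ← add_smul]
    exact Submodule.neg_mem _ (Submodule.smul_mem _ _ (Submodule.mem_span_singleton_self _))
  rw [← ι_mul_prod_map_ι_tails hj hjm sum_mem, List.Ico.succ_top hjm]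
  simp only [← map_sum, ← hB, List.map_append, List.prod_append, List.map_map, Function.comp_def,
    List.map_singleton, List.prod_singleton, mul_assoc]

theorem contractLeft_euler_ι_mul_prod_map_ι (hj : 2 ≤ j) (hjm : j ≤ m)
    (hA : ∀ i ∈ Finset.Ico 1 m, A i = z (2 * i - 1) * z (2 * i))
    (hrel : z 0 ^ 2 + ∑ i ∈ Finset.Icc 1 m, A i = 0)
    (hB : ∀ i, B i = ∑ l ∈ Finset.Icc i m, A l)
    (hz₀ : z 0 ≠ 0) (hA₀ : ∀ i ∈ Finset.Ico 2 j, A i ≠ 0) (hB₀ : ∀ i ∈ Finset.Icc j m, B i ≠ 0)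
    {φ : Module.Dual K M} (hφ : ∀ s < 2 * m - 1, φ (D (z s)) = z s) :
    CliffordAlgebra.contractLeft φ
        (ι K (D (z 0)) * ((List.Ico 1 m).map fun i => ι K (D (A i))).prod) =
      (z 0 * ((List.Ico 2 j).map A ++ (List.Ico j m).map B).prod * B m) •
        (ι K (logDifferential D (z 0 ^ 2 / B m)) *
          (((List.Ico 2 j).map A ++ (List.Ico j m).map B).map
            fun y => ι K (logDifferential D (y / B m))).prod) := by
  have φA : ∀ i ∈ Finset.Icc 1 m, φ (D (A i)) = 2 * A i := fun i hi =>
    dual_derivation_quadric_term D hA hrel hφ hi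
  have φB : ∀ i ∈ Finset.Icc 1 m, φ (D (B i)) = 2 * B i := fun i hi => by
    rw [hB, map_sum, map_sum, Finset.mul_sum]
    exact Finset.sum_congr rfl fun l hl =>
      φA l (Finset.Icc_subset_Icc_left (Finset.mem_Icc.1 hi).1 hl)
  have ne_zero : ∀ y ∈ (List.Ico 2 j).map A ++ (List.Ico j m).map B, y ≠ 0 := by
    simp only [List.forall_mem_append, List.forall_mem_map, List.Ico.mem]
    exact ⟨fun i hi => hA₀ i (Finset.mem_Ico.2 hi),
      fun i hi => hB₀ i (Finset.mem_Icc.2 ⟨hi.1, hi.2.le⟩)⟩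
  have weight_two : ∀ y ∈ (List.Ico 2 j).map A ++ (List.Ico j m).map B, φ (D y) = 2 * y := by
    simp only [List.forall_mem_append, List.forall_mem_map, List.Ico.mem]
    exact ⟨fun i hi => φA i (Finset.mem_Icc.2 (by omega)),
      fun i hi => φB i (Finset.mem_Icc.2 (by omega))⟩
  have key := contractLeft_prod_map_ι_derivation D φ hz₀ (hB₀ m (Finset.mem_Icc.2 ⟨hjm, le_rfl⟩))
    ne_zero (hφ 0 (by omega)) (φB m (Finset.mem_Icc.2 (by omega))) weight_two
  have length_eq : ((List.Ico 2 j).map A ++ (List.Ico j m).map B).length + 1 = m - 1 := by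
    simp only [List.length_append, List.length_map, List.Ico.length]
    omega
  rw [ι_mul_prod_map_ι_derivation_tails D hj hjm hrel hB, map_smul, length_eq, mul_smul] at key
  exact (smul_right_injective _ (pow_ne_zero _ (neg_ne_zero.2 one_ne_zero))) key

theorem qod_contraction_general (hj : 2 ≤ j) (hjm : j ≤ m)
    (hA : ∀ i ∈ Finset.Ico 1 m, A i = z (2 * i - 1) * z (2 * i))
    (hrel : z 0 ^ 2 + ∑ i ∈ Finset.Icc 1 m, A i = 0)
    (hB : ∀ i, B i = ∑ l ∈ Finset.Icc i m, A l)
    (hz₀ : z 0 ≠ 0) (hA₀ : ∀ i ∈ Finset.Ico 2 j, A i ≠ 0) (hB₀ : ∀ i ∈ Finset.Icc j m, B i ≠ 0)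
    {φ : ℕ → Module.Dual K M}
    (hφ : ∀ i ∈ Finset.Ico 1 m, ∀ s < 2 * m - 1,
      φ i (D (z s)) = if s = 2 * i - 1 then z s else if s = 2 * i then -z s else 0)
    (hφm : ∀ s < 2 * m - 1, φ m (D (z s)) = z s) :
    iterContractLeft ((List.Ico 1 (m + 1)).map φ)
        ((z 0 * (∏ i ∈ Finset.Ico 2 j, A i) * (∏ i ∈ Finset.Ico j m, B i) * A m)⁻¹ •
          ((List.range (2 * m - 1)).map fun s => ι K (D (z s))).prod) =
      ι K (logDifferential D (z 0 ^ 2 / B m)) *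
        ((List.Ico 2 j).map fun i => ι K (logDifferential D (A i / B m))).prod *
        ((List.Ico j m).map fun i => ι K (logDifferential D (B i / B m))).prod := by
  have hBm : B m = A m := by rw [hB, Finset.Icc_self, Finset.sum_singleton]
  have prod_eq : ((List.Ico 2 j).map A ++ (List.Ico j m).map B).prod =
      (∏ i ∈ Finset.Ico 2 j, A i) * ∏ i ∈ Finset.Ico j m, B i := List.prod_append
  have denom_ne_zero :
      z 0 * (∏ i ∈ Finset.Ico 2 j, A i) * (∏ i ∈ Finset.Ico j m, B i) * A m ≠ 0 := by
    refine mul_ne_zero (mul_ne_zero (mul_ne_zero hz₀ (Finset.prod_ne_zero_iff.2 hA₀))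
      (Finset.prod_ne_zero_iff.2 fun i hi => hB₀ i (Finset.Ico_subset_Icc_self hi))) ?_
    exact hBm ▸ hB₀ m (Finset.mem_Icc.2 ⟨hjm, le_rfl⟩)
  rw [map_smul, iterContractLeft_Ico_prod_map_ι_coordinates D (by omega) hA hφ,
    contractLeft_euler_ι_mul_prod_map_ι D hj hjm hA hrel hB hz₀ hA₀ hB₀ hφm, prod_eq, ← mul_assoc,
    ← hBm, inv_smul_smul₀ (hBm ▸ denom_ne_zero)]
  simp only [List.map_append, List.prod_append, List.map_map, Function.comp_def, mul_assoc]

end Quadric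

section Coordinates

variable {m : ℕ}

theorem qodZ_of_lt {s : ℕ} (hs : s < 2 * m - 1) : qodZ m s = X ⟨s, hs⟩ := dif_pos hs

theorem qodZ_ne_zero {s : ℕ} (hs : s < 2 * m - 1) : qodZ m s ≠ 0 := by
  rw [qodZ_of_lt hs]
  exact X_ne_zero _

theorem qodV_self_qodZ {s : ℕ} (hs : s < 2 * m - 1) : qodV m m (qodZ m s) = qodZ m s := by
  rw [qodV, if_pos rfl, qodZ_of_lt hs, mkDerivation_X, qodZ_of_lt hs]

theorem qodV_qodZ_of_ne {i s : ℕ} (hi : i ≠ m) (hs : s < 2 * m - 1) :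
    qodV m i (qodZ m s) =
      if s = 2 * i - 1 then qodZ m s else if s = 2 * i then -qodZ m s else 0 := by
  rw [qodV, if_neg hi, qodZ_of_lt hs, mkDerivation_X, qodZ_of_lt hs]

theorem qodA_of_ne {i : ℕ} (hi : i ≠ m) : qodA m i = qodZ m (2 * i - 1) * qodZ m (2 * i) :=
  if_neg hi

theorem qodA_ne_zero {i : ℕ} (hi : i < m) : qodA m i ≠ 0 := by
  rw [qodA_of_ne hi.ne]
  exact mul_ne_zero (qodZ_ne_zero (by omega)) (qodZ_ne_zero (by omega))

theorem qodZ_zero_sq_add_sum_qodA (hm : 1 ≤ m) :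
    qodZ m 0 ^ 2 + ∑ i ∈ Finset.Icc 1 m, qodA m i = 0 := by
  have sum_lt : ∑ i ∈ Finset.Ico 1 m, qodA m i =
      ∑ i ∈ Finset.Icc 1 (m - 1), qodZ m (2 * i - 1) * qodZ m (2 * i) := by
    rw [← Finset.Ico_add_one_right_eq_Icc, Nat.sub_add_cancel hm]
    exact Finset.sum_congr rfl fun i hi => qodA_of_ne (Finset.mem_Ico.1 hi).2.ne
  rw [← Finset.Ico_add_one_right_eq_Icc, Finset.sum_Ico_succ_top hm, sum_lt, qodA, if_pos rfl]
  ring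

theorem qodB_eq_neg {k : ℕ} (hk : 1 ≤ k) (hkm : k ≤ m) :
    qodB m k = -(qodZ m 0 ^ 2 + ∑ i ∈ Finset.Ico 1 k, qodA m i) := by
  have hrel := qodZ_zero_sq_add_sum_qodA (hk.trans hkm)
  rw [← Finset.Ico_add_one_right_eq_Icc,
    ← Finset.sum_Ico_consecutive _ hk (by omega : k ≤ m + 1), ← add_assoc] at hrel
  rw [qodB, ← Finset.Ico_add_one_right_eq_Icc]
  exact eq_neg_of_add_eq_zero_right hrel

theorem qodB_ne_zero {k : ℕ} (hk : 1 ≤ k) (hkm : k ≤ m) : qodB m k ≠ 0 := by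
  -- Evaluate at the point with `z₀ = 1` and all other coordinates zero, where `B_k = -1`.
  let p : QodR m →ₐ[ℂ] ℂ := aeval fun s => if s.1 = 0 then 1 else 0
  have p_qodZ : ∀ s < 2 * m - 1, p (qodZ m s) = if s = 0 then 1 else 0 := fun s hs => by
    rw [qodZ_of_lt hs]
    exact aeval_X _ _
  have p_qodA : ∀ i ∈ Finset.Ico 1 k, p (qodA m i) = 0 := fun i hi => by
    rw [Finset.mem_Ico] at hi
    rw [qodA_of_ne (by omega), map_mul, p_qodZ (2 * i) (by omega), if_neg (by omega), mul_zero]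
  have p_qodB : p (qodB m k) = -1 := by
    rw [qodB_eq_neg hk hkm, map_neg, map_add, map_pow, p_qodZ 0 (by omega), if_pos rfl, one_pow,
      map_sum, Finset.sum_eq_zero p_qodA, add_zero]
  intro hB
  rw [hB, map_zero] at p_qodB
  exact neg_ne_zero.2 one_ne_zero p_qodB.symm

theorem qodR_algebraMap_ne_zero {f : QodR m} (hf : f ≠ 0) : algebraMap (QodR m) (QodK m) f ≠ 0 :=
  (map_ne_zero_iff _ (IsFractionRing.injective (QodR m) (QodK m))).2 hf

theorem qodAK_of_ne {i : ℕ} (hi : i ≠ m) : qodAK m i = qodZK m (2 * i - 1) * qodZK m (2 * i) := by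
  rw [qodAK, qodA_of_ne hi, map_mul, qodZK, qodZK]

theorem qodZK_zero_sq_add_sum_qodAK (hm : 1 ≤ m) :
    qodZK m 0 ^ 2 + ∑ i ∈ Finset.Icc 1 m, qodAK m i = 0 := by
  simp only [qodZK, qodAK, ← map_sum, ← map_pow, ← map_add, qodZ_zero_sq_add_sum_qodA hm, map_zero]

theorem qodBK_eq_sum (k : ℕ) : qodBK m k = ∑ i ∈ Finset.Icc k m, qodAK m i :=
  map_sum _ _ _

variable {V : Derivation ℂ (QodK m) (QodK m)} {i : ℕ}

theorem liftKaehlerDifferential_D_qodZK_of_ne (hi : i ≠ m)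
    (hV : ∀ g, V (algebraMap (QodR m) (QodK m) g) = algebraMap (QodR m) (QodK m) (qodV m i g))
    {s : ℕ} (hs : s < 2 * m - 1) :
    V.liftKaehlerDifferential (KaehlerDifferential.D ℂ (QodK m) (qodZK m s)) =
      if s = 2 * i - 1 then qodZK m s else if s = 2 * i then -qodZK m s else 0 := by
  rw [Derivation.liftKaehlerDifferential_comp_D, qodZK, hV, qodV_qodZ_of_ne hi hs,
    apply_ite (algebraMap _ _), apply_ite (algebraMap _ _), map_neg, map_zero]

theorem liftKaehlerDifferential_D_qodZK_self
    (hV : ∀ g, V (algebraMap (QodR m) (QodK m) g) = algebraMap (QodR m) (QodK m) (qodV m m g))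
    {s : ℕ} (hs : s < 2 * m - 1) :
    V.liftKaehlerDifferential (KaehlerDifferential.D ℂ (QodK m) (qodZK m s)) = qodZK m s := by
  rw [Derivation.liftKaehlerDifferential_comp_D, qodZK, hV, qodV_self_qodZ hs]

end Coordinates

/-- Proposition 3.11: for every `2 ≤ j ≤ m` there exists a sign `ε ∈ {1, −1}`
with `ι_{V₁}⋯ι_{V_m} ((z₀A₂⋯A_{j−1}·B_j⋯B_{m−1}·A_m)⁻¹ Ω)
 = ε · dlog(z₀²/B_m) ∧ dlog(A₂/B_m) ∧ ⋯ ∧ dlog(A_{j−1}/B_m)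
     ∧ dlog(B_j/B_m) ∧ ⋯ ∧ dlog(B_{m−1}/B_m)`,
where the `ι_{V_i}` are the (unique) extensions of the derivations `V_i` to `K`. -/
theorem qod_contraction (m : ℕ) (hm : 2 ≤ m) (j : ℕ) (hj : 2 ≤ j ∧ j ≤ m)
    (W : ℕ → Derivation ℂ (QodK m) (QodK m))
    (hW : ∀ i, ∀ g : QodR m,
      W i (algebraMap (QodR m) (QodK m) g) = algebraMap (QodR m) (QodK m) (qodV m i g)) :
    ∃ ε : QodK m, (ε = 1 ∨ ε = -1) ∧
      (List.Ico 1 (m + 1)).foldr (fun i ω => contrDer (W i) ω)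
          (((qodZK m 0 * (∏ k ∈ Finset.Ico 2 j, qodAK m k) *
              (∏ k ∈ Finset.Ico j m, qodBK m k) * qodAK m m)⁻¹) • qodOmegaK m) =
        ε • (ExteriorAlgebra.ι (QodK m) (dlog m (qodZK m 0 ^ 2 / qodBK m m)) *
          (((List.Ico 2 j).map (fun k =>
            ExteriorAlgebra.ι (QodK m) (dlog m (qodAK m k / qodBK m m)))).prod) *
          (((List.Ico j m).map (fun k =>
            ExteriorAlgebra.ι (QodK m) (dlog m (qodBK m k / qodBK m m)))).prod)) := by
  refine ⟨1, Or.inl rfl, ?_⟩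
  have contraction := qod_contraction_general (KaehlerDifferential.D ℂ (QodK m)) hj.1 hj.2
    (z := qodZK m) (A := qodAK m) (B := qodBK m) (φ := fun i => (W i).liftKaehlerDifferential)
    (fun i hi => qodAK_of_ne (Finset.mem_Ico.1 hi).2.ne)
    (qodZK_zero_sq_add_sum_qodAK (by omega)) qodBK_eq_sum
    (qodR_algebraMap_ne_zero (qodZ_ne_zero (by omega)))
    (fun i hi => qodR_algebraMap_ne_zero
      (qodA_ne_zero ((Finset.mem_Ico.1 hi).2.trans_le hj.2)))
    (fun i hi => by
      rw [Finset.mem_Icc] at hi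
      exact qodR_algebraMap_ne_zero (qodB_ne_zero (by omega) hi.2))
    (fun i hi _ => liftKaehlerDifferential_D_qodZK_of_ne (Finset.mem_Ico.1 hi).2.ne (hW i))
    (fun _ => liftKaehlerDifferential_D_qodZK_self (hW m))
  rw [iterContractLeft_map] at contraction
  rwa [one_smul]

end
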